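/- Let d ≥ 3 and let k ≥ 1 be an integer. For each n ≥ 0 let Q_n be the monic real polynomial of degree n satisfying ∫_{−1}^{1} Q_n(t) t^j (1−t²)^{(d−3)/2} dt = 0 for all 0 ≤ j < n. Let C ⊂ S^{d-1} be a tight spherical k-design, and let μ_C = (1/|C|) Σ_{x∈C} δ_x be its uniform measure. Then μ_C solves the constrained optimization problem: among all Borel probability measures μ on S^{d-1} satisfying ∫∫ Q_j(⟨x,y⟩) dμ(x)dμ(y) = 0 for all 1 ≤ j ≤ k, the measure μ_C maximizes ∫∫ Q_{k+1}(⟨x,y⟩) dμ(x)dμ(y). -/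

import Mathlib

/-!
Let `α` run over `A(C)`. If `k = 2m` put `p = (t - 1) ∏ (t - α)²`; if `k = 2m - 1`, so that
`-1 ∈ A(C)`, put `p = (t - 1)(t + 1) ∏_{α ≠ -1} (t - α)²`. In both cases `p` is monic of degree
`k + 1`, is nonpositive on `[-1, 1]`, and vanishes at every inner product of two points of `C`.
Hence the `p`-energy of any probability measure is at most `0`, which is the `p`-energy of `μ_C`
(`exists_test_polynomial`).

Expanding `p = Q_{k+1} + ∑_{j ≤ k} c_j Q_j`, the terms with `1 ≤ j ≤ k` do not contribute to the
energy of a feasible measure and the term `j = 0` contributes the same constant for all of them,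
so the inequality for `p` is the inequality for `Q_{k+1}` (`linearMap_eq_zero_of_degree_lt`).

Feasibility of `μ_C` comes from the design property: for fixed `x`, the average over `y ∈ C` of
`Q_j(⟨x, y⟩)` is its mean over the sphere. That mean is proportional to
`∫ Q_j(t) (1 - t²)^((d-3)/2) dt = 0`, since the moments of `⟨x, ·⟩` on the sphere and the moments
of the weight satisfy the same recursion `(n + d) a_{n+2} = (n + 1) a_n`, `a_1 = 0`. On the sphere
the recursion is obtained by computing `∫ ⟨x, u⟩^n exp(-‖u‖²) du` over `ℝ^d` both in polar and in
Cartesian coordinates.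
-/

open MeasureTheory Metric
open scoped RealInnerProductSpace

noncomputable section

/-- The unit sphere `S^{d-1}` in `ℝ^d` with the standard inner product. -/
abbrev Sph (d : ℕ) := Metric.sphere (0 : EuclideanSpace ℝ (Fin d)) 1

/-- The uniform (rotation-invariant) Borel probability measure `σ` on the sphere
`S^{d-1}`, obtained by normalizing the canonical measure on the unit sphere induced
by the Lebesgue measure. -/
def sphσ (d : ℕ) : Measure (Sph d) :=
  (((volume : Measure (EuclideanSpace ℝ (Fin d))).toSphere) Set.univ)⁻¹ •
    ((volume : Measure (EuclideanSpace ℝ (Fin d))).toSphere)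

variable {d : ℕ}

/-- The energy integral `I_f(μ) = ∫∫ f (⟨x,y⟩) dμ(x) dμ(y)` of a Borel measure `μ`
on the sphere `S^{d-1}`. -/
def energy (f : ℝ → ℝ) (μ : Measure (Sph d)) : ℝ :=
  ∫ x, ∫ y, f ⟪(x : EuclideanSpace ℝ (Fin d)), (y : EuclideanSpace ℝ (Fin d))⟫ ∂μ ∂μ

/-- The uniform probability measure `(1/|C|) ∑_{x ∈ C} δ_x` on a finite set
`C ⊆ S^{d-1}`. -/
def unifOn (C : Finset (Sph d)) : Measure (Sph d) :=
  (C.card : ENNReal)⁻¹ • ∑ x ∈ C, Measure.dirac x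

/-- Evaluation of a polynomial in `d` variables at a point of the sphere. -/
def evalPt (P : MvPolynomial (Fin d) ℝ) (x : Sph d) : ℝ :=
  MvPolynomial.eval (fun i => (x : EuclideanSpace ℝ (Fin d)) i) P

/-- `C` is a spherical `t`-design: averaging any polynomial of total degree at most
`t` over `C` gives its mean over the sphere with respect to the uniform measure. -/
def IsSphDesign (d t : ℕ) (C : Finset (Sph d)) : Prop :=
  C.Nonempty ∧ ∀ P : MvPolynomial (Fin d) ℝ, P.totalDegree ≤ t →
    (∑ x ∈ C, evalPt P x) / (C.card : ℝ) = ∫ x, evalPt P x ∂(sphσ d)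

/-- The set `A(C) = {⟨x,y⟩ : x, y ∈ C, x ≠ y}` of inner products between distinct
points of `C`. -/
def innerProds (C : Finset (Sph d)) : Set ℝ :=
  {t | ∃ x ∈ C, ∃ y ∈ C, x ≠ y ∧
    ⟪(x : EuclideanSpace ℝ (Fin d)), (y : EuclideanSpace ℝ (Fin d))⟫ = t}

/-- `C` is a tight spherical `M`-design: it is a spherical `M`-design, and either
`M = 2m` and `A(C)` has exactly `m` elements, or `M = 2m - 1` and `A(C)` has exactly
`m` elements, one of which is `-1`. -/
def IsTightSphDesign (d M : ℕ) (C : Finset (Sph d)) : Prop :=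
  IsSphDesign d M C ∧
    ((∃ m, M = 2 * m ∧ (innerProds C).ncard = m) ∨
     (∃ m, M + 1 = 2 * m ∧ (innerProds C).ncard = m ∧ (-1 : ℝ) ∈ innerProds C))

/-- A function `h : [-1,1] → ℝ` is positive definite on `S^{d-1}` if all matrices
`(h(⟨x_i, x_j⟩))_{i,j}` arising from points of the sphere are positive semidefinite. -/
def IsPosDefOn (d : ℕ) (h : ℝ → ℝ) : Prop :=
  ∀ (N : ℕ) (x : Fin N → Sph d) (c : Fin N → ℂ),
    0 ≤ (∑ i, ∑ j,
      (h ⟪(x i : EuclideanSpace ℝ (Fin d)), (x j : EuclideanSpace ℝ (Fin d))⟫ : ℂ)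
        * c i * (starRingEnd ℂ) (c j)).re

/-! ### Moments of the Gegenbauer weight -/

/-- The `n`-th moment of the weight `(1 - s²)^((d-3)/2)` on `[-1, 1]`. -/
def weightMoment (d n : ℕ) : ℝ :=
  ∫ s in (-1 : ℝ)..1, s ^ n * (1 - s ^ 2) ^ (((d : ℝ) - 3) / 2)

lemma continuous_weight {d : ℕ} (hd : 3 ≤ d) :
    Continuous fun s : ℝ => (1 - s ^ 2) ^ (((d : ℝ) - 3) / 2) := by
  have h : (3 : ℝ) ≤ d := by exact_mod_cast hd
  refine Continuous.rpow_const (by fun_prop) fun s => Or.inr ?_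
  linarith

/-- The integral over `[-1, 1]` of the derivative of `s^n (1 - s²)^((d-1)/2)` vanishes. -/
lemma integral_weight_deriv {d : ℕ} (hd : 3 ≤ d) (n : ℕ) :
    ∫ s in (-1 : ℝ)..1, ((n : ℝ) * s ^ (n - 1) * (1 - s ^ 2) ^ (((d : ℝ) - 3) / 2 + 1)
      - ((d : ℝ) - 1) * (s ^ (n + 1) * (1 - s ^ 2) ^ (((d : ℝ) - 3) / 2))) = 0 := by
  have h3 : (3 : ℝ) ≤ d := by exact_mod_cast hd
  have hder : ∀ s : ℝ, HasDerivAt (fun s : ℝ => s ^ n * (1 - s ^ 2) ^ (((d : ℝ) - 3) / 2 + 1))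
      ((n : ℝ) * s ^ (n - 1) * (1 - s ^ 2) ^ (((d : ℝ) - 3) / 2 + 1)
      - ((d : ℝ) - 1) * (s ^ (n + 1) * (1 - s ^ 2) ^ (((d : ℝ) - 3) / 2))) s := by
    intro s
    have h1 : HasDerivAt (fun s : ℝ => 1 - s ^ 2) (-(2 * s)) s := by
      simpa using (hasDerivAt_pow 2 s).const_sub 1
    have h2 := h1.rpow_const (p := ((d : ℝ) - 3) / 2 + 1) (Or.inr (by linarith))
    have h4 := (hasDerivAt_pow n s).mul h2
    refine h4.congr_deriv ?_
    rw [add_sub_cancel_right]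
    ring
  have hw := continuous_weight hd
  have hw1 : Continuous fun s : ℝ => (1 - s ^ 2) ^ (((d : ℝ) - 3) / 2 + 1) :=
    Continuous.rpow_const (by fun_prop) fun s => Or.inr (by linarith)
  rw [intervalIntegral.integral_eq_sub_of_hasDerivAt (fun s _ => hder s)
    (Continuous.intervalIntegrable (by fun_prop) _ _)]
  have : ((d : ℝ) - 3) / 2 + 1 ≠ 0 := by linarith
  simp [Real.zero_rpow this]

lemma weightMoment_one {d : ℕ} (hd : 3 ≤ d) : weightMoment d 1 = 0 := by
  have h := integral_weight_deriv hd 0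
  have h3 : (3 : ℝ) ≤ d := by exact_mod_cast hd
  simp only [Nat.cast_zero, zero_mul, zero_sub, zero_add] at h
  rw [intervalIntegral.integral_neg, intervalIntegral.integral_const_mul, neg_eq_zero] at h
  exact (mul_eq_zero.1 h).resolve_left (by linarith)

lemma weightMoment_add_two {d : ℕ} (hd : 3 ≤ d) (n : ℕ) :
    ((n : ℝ) + d) * weightMoment d (n + 2) = (n + 1) * weightMoment d n := by
  have h := integral_weight_deriv hd (n + 1)
  have h3 : (3 : ℝ) ≤ d := by exact_mod_cast hd
  have hw := continuous_weight hd
  have hcongr : ∫ s in (-1 : ℝ)..1, (((n + 1 : ℕ) : ℝ) * s ^ (n + 1 - 1)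
        * (1 - s ^ 2) ^ (((d : ℝ) - 3) / 2 + 1)
      - ((d : ℝ) - 1) * (s ^ (n + 1 + 1) * (1 - s ^ 2) ^ (((d : ℝ) - 3) / 2)))
      = ∫ s in (-1 : ℝ)..1, (((n : ℝ) + 1) * (s ^ n * (1 - s ^ 2) ^ (((d : ℝ) - 3) / 2))
        - ((n : ℝ) + d) * (s ^ (n + 2) * (1 - s ^ 2) ^ (((d : ℝ) - 3) / 2))) := by
    refine intervalIntegral.integral_congr fun s hs => ?_
    rw [Set.uIcc_of_le (by norm_num)] at hs
    have h0 : 0 ≤ 1 - s ^ 2 := by nlinarith [hs.1, hs.2]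
    simp only [Nat.add_sub_cancel]
    rw [Real.rpow_add_one' h0 (by linarith)]
    push_cast
    ring
  rw [hcongr, intervalIntegral.integral_sub, intervalIntegral.integral_const_mul,
    intervalIntegral.integral_const_mul] at h
  · unfold weightMoment
    linarith
  · exact Continuous.intervalIntegrable (by fun_prop) _ _
  · exact Continuous.intervalIntegrable (by fun_prop) _ _

lemma weightMoment_zero_pos {d : ℕ} (hd : 3 ≤ d) : 0 < weightMoment d 0 := by
  unfold weightMoment
  have hw := continuous_weight hd
  refine intervalIntegral.intervalIntegral_pos_of_pos_on
    (Continuous.intervalIntegrable (by fun_prop) _ _) (fun s hs => ?_) (by norm_num)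
  have h0 : 0 < 1 - s ^ 2 := by nlinarith [hs.1, hs.2]
  positivity

/-! ### Moments of a coordinate on the sphere -/

/-- The Gaussian moment `∫ t^n exp(-t²) dt` over the line. -/
def gaussMoment (n : ℕ) : ℝ := ∫ t : ℝ, t ^ n * Real.exp (-t ^ 2)

/-- The Gaussian moment `∫ r^n exp(-r²) dr` over the half-line. -/
def halfGaussMoment (n : ℕ) : ℝ := ∫ r in Set.Ioi (0 : ℝ), r ^ n * Real.exp (-r ^ 2)

lemma integrable_pow_mul_gauss (n : ℕ) :
    Integrable fun t : ℝ => t ^ n * Real.exp (-t ^ 2) := by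
  have := integrable_rpow_mul_exp_neg_mul_sq (b := 1) one_pos (s := n)
    (by linarith [n.cast_nonneg (α := ℝ)])
  simpa using this

lemma integral_gauss_deriv (n : ℕ) :
    (n : ℝ) * gaussMoment (n - 1) - 2 * gaussMoment (n + 1) = 0 := by
  have hder : ∀ t : ℝ, HasDerivAt (fun t : ℝ => t ^ n * Real.exp (-t ^ 2))
      ((n : ℝ) * (t ^ (n - 1) * Real.exp (-t ^ 2))
        - 2 * (t ^ (n + 1) * Real.exp (-t ^ 2))) t := by
    intro t
    have h1 : HasDerivAt (fun s : ℝ => -s ^ 2) (-(2 * t)) t := by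
      simpa using (hasDerivAt_pow 2 t).fun_neg
    refine ((hasDerivAt_pow n t).mul h1.exp).congr_deriv ?_
    ring
  have i1 := (integrable_pow_mul_gauss (n - 1)).const_mul (n : ℝ)
  have i2 := (integrable_pow_mul_gauss (n + 1)).const_mul 2
  have := integral_eq_zero_of_hasDerivAt_of_integrable hder (i1.sub i2)
    (integrable_pow_mul_gauss n)
  rwa [integral_sub i1 i2, integral_const_mul, integral_const_mul] at this

lemma halfGaussMoment_eq (n : ℕ) :
    halfGaussMoment n = 1 / 2 * Real.Gamma (((n : ℝ) + 1) / 2) := by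
  have := integral_rpow_mul_exp_neg_rpow (p := 2) (q := n) two_pos
    (by linarith [n.cast_nonneg (α := ℝ)])
  rw [← this]
  simp [halfGaussMoment]

lemma halfGaussMoment_pos (n : ℕ) : 0 < halfGaussMoment n := by
  rw [halfGaussMoment_eq]
  have := Real.Gamma_pos_of_pos (s := ((n : ℝ) + 1) / 2) (by positivity)
  positivity

lemma halfGaussMoment_add_two (n : ℕ) :
    2 * halfGaussMoment (n + 2) = (n + 1) * halfGaussMoment n := by
  rw [halfGaussMoment_eq, halfGaussMoment_eq,
    show (((n + 2 : ℕ) : ℝ) + 1) / 2 = ((n : ℝ) + 1) / 2 + 1 by push_cast; ring,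
    Real.Gamma_add_one (by positivity)]
  ring

/-- The `n`-th moment of `y ↦ ⟨x, y⟩` for the unnormalized surface measure on the sphere. -/
def sphereMoment {d : ℕ} (x : Sph d) (n : ℕ) : ℝ :=
  ∫ y : Sph d, ⟪(x : EuclideanSpace ℝ (Fin d)), (y : EuclideanSpace ℝ (Fin d))⟫ ^ n
    ∂((volume : Measure (EuclideanSpace ℝ (Fin d))).toSphere)

/-- The Gaussian integral of `⟨x, u⟩^n` in polar coordinates. -/
lemma gauss_integral_polar {d : ℕ} (hd : 3 ≤ d) (x : Sph d) (n : ℕ) :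
    ∫ u : EuclideanSpace ℝ (Fin d), ⟪(x : EuclideanSpace ℝ (Fin d)), u⟫ ^ n
        * Real.exp (-‖u‖ ^ 2)
      = sphereMoment x n * halfGaussMoment (d - 1 + n) := by
  set E := EuclideanSpace ℝ (Fin d)
  have hdim : Module.finrank ℝ E = d := by simp [E]
  have : Nontrivial E := by
    apply Module.nontrivial_of_finrank_pos (R := ℝ); omega
  set F : E → ℝ := fun u => ⟪(x : E), u⟫ ^ n * Real.exp (-‖u‖ ^ 2) with hF
  calc ∫ u : E, F u
      = ∫ u : ({(0)}ᶜ : Set E), F u.1 ∂((volume : Measure E).comap (↑)) := by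
        rw [integral_subtype_comap (measurableSet_singleton _).compl F,
          restrict_compl_singleton]
    _ = ∫ z : Sph d × Set.Ioi (0 : ℝ), ⟪(x : E), (z.1 : E)⟫ ^ n
          * ((z.2 : ℝ) ^ n * Real.exp (-(z.2 : ℝ) ^ 2))
          ∂((volume : Measure E).toSphere.prod (.volumeIoiPow (Module.finrank ℝ E - 1))) := by
        rw [← ((volume : Measure E).measurePreserving_homeomorphUnitSphereProd).integral_comp
          (Homeomorph.measurableEmbedding _)]
        refine integral_congr_ae (Filter.Eventually.of_forall fun u => ?_)
        have hu : ‖(u : E)‖ ≠ 0 := norm_ne_zero_iff.2 u.2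
        simp only [hF, homeomorphUnitSphereProd_apply_snd_coe,
          homeomorphUnitSphereProd_apply_fst_coe, inner_smul_right, mul_pow, inv_pow]
        field_simp
    _ = sphereMoment x n * ∫ r : Set.Ioi (0 : ℝ), (r : ℝ) ^ n * Real.exp (-(r : ℝ) ^ 2)
          ∂(.volumeIoiPow (Module.finrank ℝ E - 1)) := by
        rw [integral_prod_mul (fun y : Sph d => ⟪(x : E), (y : E)⟫ ^ n)
          (fun r : Set.Ioi (0 : ℝ) => (r : ℝ) ^ n * Real.exp (-(r : ℝ) ^ 2))]
        rfl
    _ = sphereMoment x n * halfGaussMoment (d - 1 + n) := by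
        congr 1
        simp only [Measure.volumeIoiPow, ENNReal.ofReal]
        rw [integral_withDensity_eq_integral_smul,
          integral_subtype_comap measurableSet_Ioi fun a : ℝ =>
            Real.toNNReal (a ^ (Module.finrank ℝ E - 1)) • (a ^ n * Real.exp (-a ^ 2)),
          halfGaussMoment]
        · refine setIntegral_congr_fun measurableSet_Ioi fun r hr => ?_
          rw [NNReal.smul_def, Real.coe_toNNReal _ (pow_nonneg (le_of_lt hr) _), hdim, smul_eq_mul,
            pow_add, mul_assoc]
        · exact (measurable_subtype_coe.pow_const _).real_toNNReal

/-- The Gaussian integral of `⟨x, u⟩^n` in orthonormal coordinates with `x` as a basis vector. -/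
lemma gauss_integral_cartesian {d : ℕ} (hd : 3 ≤ d) (x : Sph d) (n : ℕ) :
    ∫ u : EuclideanSpace ℝ (Fin d), ⟪(x : EuclideanSpace ℝ (Fin d)), u⟫ ^ n
        * Real.exp (-‖u‖ ^ 2)
      = gaussMoment n * gaussMoment 0 ^ (d - 1) := by
  set E := EuclideanSpace ℝ (Fin d)
  let i₀ : Fin d := ⟨0, by omega⟩
  have hx : ‖(x : E)‖ = 1 := by simp
  have hon : Orthonormal ℝ (({i₀} : Set (Fin d)).domRestrict fun _ => (x : E)) := by
    refine ⟨fun _ => hx, fun i j hij => (hij (Subsingleton.elim i j)).elim⟩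
  obtain ⟨b, hb⟩ := hon.exists_orthonormalBasis_extension_of_card_eq (by simp)
  have hb0 : b i₀ = x := hb i₀ rfl
  have hmp : MeasurePreserving (fun v : Fin d → ℝ => b.repr.symm (WithLp.toLp 2 v)) :=
    b.measurePreserving_repr_symm.comp (PiLp.volume_preserving_toLp (Fin d))
  have hemb : MeasurableEmbedding (fun v : Fin d → ℝ => b.repr.symm (WithLp.toLp 2 v)) :=
    b.measurableEquiv.symm.measurableEmbedding.comp
      (MeasurableEquiv.toLp 2 (Fin d → ℝ)).measurableEmbedding
  rw [← hmp.integral_comp hemb]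
  have hfun : ∀ v : Fin d → ℝ,
      ⟪(x : E), b.repr.symm (WithLp.toLp 2 v)⟫ ^ n
        * Real.exp (-‖b.repr.symm (WithLp.toLp 2 v)‖ ^ 2)
      = ∏ i, (if i = i₀ then v i ^ n else 1) * Real.exp (-v i ^ 2) := by
    intro v
    rw [← hb0, ← b.repr_apply_apply, LinearIsometryEquiv.apply_symm_apply,
      LinearIsometryEquiv.norm_map, EuclideanSpace.norm_sq_eq, Finset.prod_mul_distrib,
      ← Real.exp_sum, Finset.prod_ite_eq' Finset.univ i₀]
    simp
  simp_rw [hfun]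
  rw [integral_fintype_prod_volume_eq_prod
    (fun i (t : ℝ) => (if i = i₀ then t ^ n else 1) * Real.exp (-t ^ 2)),
    ← Finset.mul_prod_erase _ _ (Finset.mem_univ i₀)]
  refine congrArg₂ (· * ·) ?_ ?_
  · simp [gaussMoment]
  · rw [Finset.prod_congr rfl (g := fun _ => gaussMoment 0), Finset.prod_const,
      Finset.card_erase_of_mem (Finset.mem_univ _)]
    · simp
    · intro i hi
      simp [gaussMoment, Finset.ne_of_mem_erase hi]

lemma sphereMoment_one {d : ℕ} (hd : 3 ≤ d) (x : Sph d) : sphereMoment x 1 = 0 := by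
  have h := (gauss_integral_polar hd x 1).symm.trans (gauss_integral_cartesian hd x 1)
  have hg : gaussMoment 1 = 0 := by simpa using integral_gauss_deriv 0
  rw [hg, zero_mul] at h
  exact (mul_eq_zero.1 h).resolve_right (halfGaussMoment_pos _).ne'

lemma sphereMoment_add_two {d : ℕ} (hd : 3 ≤ d) (x : Sph d) (n : ℕ) :
    ((n : ℝ) + d) * sphereMoment x (n + 2) = (n + 1) * sphereMoment x n := by
  have h0 := (gauss_integral_polar hd x n).symm.trans (gauss_integral_cartesian hd x n)
  have h2 := (gauss_integral_polar hd x (n + 2)).symm.trans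
    (gauss_integral_cartesian hd x (n + 2))
  have hg : ((n : ℝ) + 1) * gaussMoment n = 2 * gaussMoment (n + 2) := by
    have := integral_gauss_deriv (n + 1)
    push_cast at this
    simpa [sub_eq_zero] using this
  have hr := halfGaussMoment_add_two (d - 1 + n)
  have hcast : ((d - 1 + n : ℕ) : ℝ) = d - 1 + n := by
    rw [Nat.cast_add, Nat.cast_sub (by omega)]; simp
  rw [hcast] at hr
  have hpos := halfGaussMoment_pos (d - 1 + n)
  rw [← add_assoc] at h2
  refine mul_right_cancel₀ hpos.ne' ?_
  linear_combination (-(sphereMoment x (n + 2))) * hr + 2 * h2 - ((n : ℝ) + 1) * h0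
    - gaussMoment 0 ^ (d - 1) * hg

/-- The two moment sequences are proportional, as they satisfy the same recursion. -/
lemma sphereMoment_mul_weightMoment {d : ℕ} (hd : 3 ≤ d) (x : Sph d) (n : ℕ) :
    sphereMoment x n * weightMoment d 0 = weightMoment d n * sphereMoment x 0 := by
  induction n using Nat.twoStepInduction with
  | zero => ring
  | one => rw [sphereMoment_one hd, weightMoment_one hd]; ring
  | more n ih _ =>
    have h1 := sphereMoment_add_two hd x n
    have h2 := weightMoment_add_two hd n
    have hpos : (n : ℝ) + d ≠ 0 := by
      have : (3 : ℝ) ≤ d := by exact_mod_cast hd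
      positivity
    refine mul_left_cancel₀ hpos ?_
    linear_combination weightMoment d 0 * h1 - sphereMoment x 0 * h2 + ((n : ℝ) + 1) * ih

lemma integrable_of_continuous_compact {X : Type*} [TopologicalSpace X] [CompactSpace X]
    [MeasurableSpace X] [OpensMeasurableSpace X] {μ : Measure X} [IsFiniteMeasure μ]
    [SecondCountableTopology X] {f : X → ℝ} (hf : Continuous f) : Integrable f μ := by
  obtain ⟨M, hM⟩ := isCompact_univ.exists_bound_of_continuousOn hf.continuousOn
  exact Integrable.of_bound hf.aestronglyMeasurable M
    (Filter.Eventually.of_forall fun x => hM x trivial)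

/-- A polynomial with vanishing weighted integral, evaluated at `⟨x, ·⟩`, has mean zero on the
sphere. -/
lemma integral_sphσ_eq_zero {d : ℕ} (hd : 3 ≤ d) (x : Sph d) (q : Polynomial ℝ)
    (hq : ∫ s in (-1 : ℝ)..1, q.eval s * (1 - s ^ 2) ^ (((d : ℝ) - 3) / 2) = 0) :
    ∫ y : Sph d, q.eval ⟪(x : EuclideanSpace ℝ (Fin d)), (y : EuclideanSpace ℝ (Fin d))⟫
      ∂(sphσ d) = 0 := by
  have hw := continuous_weight hd
  have hW : ∑ i ∈ Finset.range (q.natDegree + 1), q.coeff i * weightMoment d i = 0 := by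
    rw [← hq]
    simp_rw [Polynomial.eval_eq_sum_range, Finset.sum_mul]
    rw [intervalIntegral.integral_finsetSum]
    · refine Finset.sum_congr rfl fun i _ => ?_
      simp_rw [mul_assoc]
      rw [intervalIntegral.integral_const_mul]
      rfl
    · exact fun i _ => Continuous.intervalIntegrable (by fun_prop) _ _
  have hS : ∫ y : Sph d, q.eval ⟪(x : EuclideanSpace ℝ (Fin d)),
      (y : EuclideanSpace ℝ (Fin d))⟫ ∂((volume : Measure (EuclideanSpace ℝ (Fin d))).toSphere)
      = ∑ i ∈ Finset.range (q.natDegree + 1), q.coeff i * sphereMoment x i := by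
    simp_rw [Polynomial.eval_eq_sum_range]
    rw [integral_finsetSum]
    · refine Finset.sum_congr rfl fun i _ => ?_
      rw [integral_const_mul]
      rfl
    · exact fun i _ => integrable_of_continuous_compact (by fun_prop)
  rw [sphσ, integral_smul_measure, hS]
  have : (∑ i ∈ Finset.range (q.natDegree + 1), q.coeff i * sphereMoment x i)
      * weightMoment d 0 = 0 := by
    calc _ = (∑ i ∈ Finset.range (q.natDegree + 1), q.coeff i * weightMoment d i)
          * sphereMoment x 0 := by
          simp_rw [Finset.sum_mul, mul_assoc, sphereMoment_mul_weightMoment hd]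
      _ = 0 := by rw [hW, zero_mul]
  rw [(mul_eq_zero.1 this).resolve_right (weightMoment_zero_pos hd).ne', smul_zero]

/-! ### Energies -/

lemma integral_unifOn {d : ℕ} (C : Finset (Sph d)) (g : Sph d → ℝ) :
    ∫ y, g y ∂(unifOn C) = (∑ y ∈ C, g y) / (C.card : ℝ) := by
  rw [unifOn, integral_smul_measure, integral_finsetSum_measure]
  · simp [div_eq_inv_mul]
  · exact fun i _ => integrable_dirac (by simp)

lemma isProbabilityMeasure_unifOn {d : ℕ} {C : Finset (Sph d)} (hC : C.Nonempty) :
    IsProbabilityMeasure (unifOn C) := by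
  constructor
  simp only [unifOn, Measure.smul_apply, Measure.finsetSum_apply, measure_univ,
    Finset.sum_const, smul_eq_mul, nsmul_eq_mul, mul_one]
  exact ENNReal.inv_mul_cancel (by simpa using hC.ne_empty) (by simp)

lemma energy_eq_integral_prod {d : ℕ} (μ : Measure (Sph d)) [IsFiniteMeasure μ]
    (q : Polynomial ℝ) :
    energy (fun s => q.eval s) μ = ∫ z : Sph d × Sph d,
      q.eval ⟪(z.1 : EuclideanSpace ℝ (Fin d)), (z.2 : EuclideanSpace ℝ (Fin d))⟫ ∂(μ.prod μ) := by
  rw [integral_prod]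
  · rfl
  · exact integrable_of_continuous_compact (by fun_prop)

/-- The energy of a finite measure as a linear functional of the polynomial potential. -/
def energyLinear {d : ℕ} (μ : Measure (Sph d)) [IsFiniteMeasure μ] : Polynomial ℝ →ₗ[ℝ] ℝ where
  toFun q := energy (fun s => q.eval s) μ
  map_add' p q := by
    simp_rw [energy_eq_integral_prod, Polynomial.eval_add]
    exact integral_add (integrable_of_continuous_compact (by fun_prop))
      (integrable_of_continuous_compact (by fun_prop))
  map_smul' c q := by
    simp_rw [energy_eq_integral_prod, Polynomial.eval_smul]
    exact integral_smul _ _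

lemma energyLinear_one {d : ℕ} (μ : Measure (Sph d)) [IsProbabilityMeasure μ] :
    energyLinear μ 1 = 1 := by
  simp [energyLinear, energy]

lemma linearMap_eq_zero_of_degree_lt (Q : ℕ → Polynomial ℝ) (hQmonic : ∀ n, (Q n).Monic)
    (hQdeg : ∀ n, (Q n).natDegree = n) (D : Polynomial ℝ →ₗ[ℝ] ℝ) (n : ℕ)
    (hD : ∀ j < n, D (Q j) = 0) (p : Polynomial ℝ) (hp : p.degree < n) : D p = 0 := by
  induction n generalizing p with
  | zero =>
    have : p = 0 := by simpa [Nat.WithBot.lt_zero_iff] using hp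
    simp [this]
  | succ n ih =>
    have hlow : (p - Polynomial.C (p.coeff n) * Q n).degree < n := by
      rw [Polynomial.degree_lt_iff_coeff_zero]
      intro m hm
      rw [Polynomial.coeff_sub, Polynomial.coeff_C_mul]
      rcases hm.eq_or_lt with rfl | hm
      · have : (Q n).coeff n = 1 := by simpa [hQdeg n] using (hQmonic n).coeff_natDegree
        rw [this]; ring
      · rw [Polynomial.coeff_eq_zero_of_natDegree_lt (p := Q n) (by rw [hQdeg]; exact hm),
          (Polynomial.degree_lt_iff_coeff_zero p (n + 1)).1 hp m hm]
        ring
    have h := ih (fun j hj => hD j (by omega)) _ hlow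
    rw [map_sub, ← Polynomial.smul_eq_C_mul, map_smul, hD n (by omega), smul_zero, sub_zero] at h
    exact h

/-! ### Designs -/

/-- The design property applied to the zonal polynomial `y ↦ q(⟨x, y⟩)`. -/
lemma IsSphDesign.average_zonal {d t : ℕ} {C : Finset (Sph d)} (hC : IsSphDesign d t C)
    (x : Sph d) (q : Polynomial ℝ) (hq : q.natDegree ≤ t) :
    (∑ y ∈ C, q.eval ⟪(x : EuclideanSpace ℝ (Fin d)), (y : EuclideanSpace ℝ (Fin d))⟫)
        / (C.card : ℝ)
      = ∫ y : Sph d, q.eval ⟪(x : EuclideanSpace ℝ (Fin d)), (y : EuclideanSpace ℝ (Fin d))⟫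
        ∂(sphσ d) := by
  let L : MvPolynomial (Fin d) ℝ :=
    ∑ i, MvPolynomial.C ((x : EuclideanSpace ℝ (Fin d)) i) * MvPolynomial.X i
  let P : MvPolynomial (Fin d) ℝ :=
    ∑ i ∈ Finset.range (q.natDegree + 1), MvPolynomial.C (q.coeff i) * L ^ i
  have hL : L.totalDegree ≤ 1 := by
    refine MvPolynomial.totalDegree_finsetSum_le fun i _ => ?_
    refine (MvPolynomial.totalDegree_mul _ _).trans ?_
    simp
  have hP : P.totalDegree ≤ t := by
    refine MvPolynomial.totalDegree_finsetSum_le fun i hi => ?_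
    refine (MvPolynomial.totalDegree_mul _ _).trans ?_
    rw [MvPolynomial.totalDegree_C, zero_add]
    refine (MvPolynomial.totalDegree_pow _ _).trans ?_
    have := Finset.mem_range.1 hi
    nlinarith
  have heval : ∀ y : Sph d, evalPt P y
      = q.eval ⟪(x : EuclideanSpace ℝ (Fin d)), (y : EuclideanSpace ℝ (Fin d))⟫ := by
    intro y
    have hLy : MvPolynomial.eval (fun i => (y : EuclideanSpace ℝ (Fin d)) i) L
        = ⟪(x : EuclideanSpace ℝ (Fin d)), (y : EuclideanSpace ℝ (Fin d))⟫ := by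
      simp [L, PiLp.inner_apply, mul_comm]
    rw [Polynomial.eval_eq_sum_range, evalPt, map_sum]
    refine Finset.sum_congr rfl fun i _ => ?_
    rw [map_mul, map_pow, hLy, MvPolynomial.eval_C]
  have := hC.2 P hP
  simpa only [heval] using this

lemma finite_innerProds {d : ℕ} (C : Finset (Sph d)) : (innerProds C).Finite := by
  refine ((C ×ˢ C).image fun z : Sph d × Sph d =>
    ⟪(z.1 : EuclideanSpace ℝ (Fin d)), (z.2 : EuclideanSpace ℝ (Fin d))⟫).finite_toSet.subset ?_
  rintro t ⟨x, hx, y, hy, -, rfl⟩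
  simp only [Finset.coe_image, Set.mem_image]
  exact ⟨(x, y), by simp [hx, hy], rfl⟩

open Polynomial in
/-- The Hermite-type annihilator of `A(C) ∪ {1}`: simple roots at `1` and, for odd `k`, at `-1`,
and double roots at the remaining elements of `A(C)`. -/
lemma exists_test_polynomial {d k : ℕ} {C : Finset (Sph d)} (hC : IsTightSphDesign d k C) :
    ∃ p : Polynomial ℝ, p.Monic ∧ p.natDegree = k + 1 ∧ p.eval 1 = 0 ∧
      (∀ t ∈ innerProds C, p.eval t = 0) ∧ ∀ t ∈ Set.Icc (-1 : ℝ) 1, p.eval t ≤ 0 := by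
  classical
  obtain ⟨-, h⟩ := hC
  have hfin := finite_innerProds C
  set A := hfin.toFinset with hA
  have hmemA : ∀ t, t ∈ A ↔ t ∈ innerProds C := fun t => hfin.mem_toFinset
  have hcard : (innerProds C).ncard = A.card := Set.ncard_eq_toFinset_card _ hfin
  have hprod : ∀ B : Finset ℝ, (∏ a ∈ B, (X - Polynomial.C a)).Monic ∧
      (∏ a ∈ B, (X - Polynomial.C a)).natDegree = B.card := fun B =>
    ⟨monic_prod_of_monic _ _ fun a _ => monic_X_sub_C a, by simp⟩
  rcases h with ⟨m, hm, hcm⟩ | ⟨m, hm, hcm, hneg⟩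
  · obtain ⟨hmon, hdeg⟩ := hprod A
    refine ⟨(X - Polynomial.C 1) * (∏ a ∈ A, (X - Polynomial.C a)) ^ 2,
      (monic_X_sub_C 1).mul (hmon.pow 2), ?_, by simp, ?_, ?_⟩
    · rw [(monic_X_sub_C 1).natDegree_mul (hmon.pow 2), hmon.natDegree_pow, hdeg,
        natDegree_X_sub_C]
      omega
    · intro t ht
      simp only [eval_mul, eval_pow, eval_prod]
      rw [Finset.prod_eq_zero ((hmemA t).2 ht) (by simp)]
      simp
    · intro t ht
      simp only [eval_mul, eval_pow, eval_sub, eval_X, eval_C]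
      exact mul_nonpos_of_nonpos_of_nonneg (by linarith [ht.2]) (sq_nonneg _)
  · have hnegA := (hmemA _).2 hneg
    obtain ⟨hmon, hdeg⟩ := hprod (A.erase (-1))
    have hcardE := Finset.card_erase_of_mem hnegA
    have hpos := Finset.card_pos.2 ⟨_, hnegA⟩
    have hmon2 := (monic_X_sub_C (1 : ℝ)).mul (monic_X_sub_C (-1 : ℝ))
    refine ⟨(X - Polynomial.C 1) * (X - Polynomial.C (-1))
        * (∏ a ∈ A.erase (-1), (X - Polynomial.C a)) ^ 2,
      hmon2.mul (hmon.pow 2), ?_, by simp, ?_, ?_⟩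
    · rw [hmon2.natDegree_mul (hmon.pow 2), (monic_X_sub_C 1).natDegree_mul (monic_X_sub_C (-1)),
        hmon.natDegree_pow, hdeg, natDegree_X_sub_C, natDegree_X_sub_C]
      omega
    · intro t ht
      by_cases h1 : t = -1
      · simp [h1]
      · simp only [eval_mul, eval_pow, eval_prod]
        rw [Finset.prod_eq_zero (Finset.mem_erase.2 ⟨h1, (hmemA t).2 ht⟩) (by simp)]
        simp
    · intro t ht
      simp only [eval_mul, eval_pow, eval_sub, eval_X, eval_C]
      refine mul_nonpos_of_nonpos_of_nonneg ?_ (sq_nonneg _)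
      nlinarith [ht.1, ht.2]

/-- Let `Q_n` be the monic Gegenbauer polynomials for `S^{d-1}`
(orthogonal to lower powers for the weight `(1-t²)^{(d-3)/2}` on `[-1,1]`). If
`C ⊆ S^{d-1}` is a tight spherical `k`-design, then its uniform measure `μ_C` satisfies
the constraints `∫∫ Q_j(⟨x,y⟩) dμ dμ = 0` for `1 ≤ j ≤ k` and maximizes
`∫∫ Q_{k+1}(⟨x,y⟩) dμ dμ` among all Borel probability measures on `S^{d-1}` satisfying
these constraints. -/
theorem tight_design_maximizes_constrained_gegenbauer_energy
    {d k : ℕ} (hd : 3 ≤ d) (hk : 1 ≤ k)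
    (Q : ℕ → Polynomial ℝ) (hQmonic : ∀ n, (Q n).Monic)
    (hQdeg : ∀ n, (Q n).natDegree = n)
    (hQorth : ∀ n, ∀ j < n,
      ∫ s in (-1 : ℝ)..1, (Q n).eval s * s ^ j * (1 - s ^ 2) ^ (((d : ℝ) - 3) / 2) = 0)
    (C : Finset (Sph d)) (hC : IsTightSphDesign d k C) :
    (∀ j, 1 ≤ j → j ≤ k → energy (fun s => (Q j).eval s) (unifOn C) = 0) ∧
    (∀ μ : Measure (Sph d), IsProbabilityMeasure μ →
      (∀ j, 1 ≤ j → j ≤ k → energy (fun s => (Q j).eval s) μ = 0) →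
      energy (fun s => (Q (k + 1)).eval s) μ
        ≤ energy (fun s => (Q (k + 1)).eval s) (unifOn C)) := by
  have hdes := hC.1
  have := isProbabilityMeasure_unifOn hdes.1
  have hfeas : ∀ j, 1 ≤ j → j ≤ k → energy (fun s => (Q j).eval s) (unifOn C) = 0 := by
    intro j hj1 hjk
    have hz : ∀ x : Sph d, ∫ y : Sph d, (Q j).eval ⟪(x : EuclideanSpace ℝ (Fin d)),
        (y : EuclideanSpace ℝ (Fin d))⟫ ∂(unifOn C) = 0 := by
      intro x
      rw [integral_unifOn, hdes.average_zonal x (Q j) (by rw [hQdeg]; exact hjk)]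
      exact integral_sphσ_eq_zero hd x (Q j) (by simpa using hQorth j 0 (by omega))
    simp [energy, hz]
  refine ⟨hfeas, fun μ hμ hμ0 => ?_⟩
  obtain ⟨p, hpmon, hpdeg, hp1, hpA, hpneg⟩ := exists_test_polynomial hC
  have hnorm : ∀ x : Sph d, ‖(x : EuclideanSpace ℝ (Fin d))‖ = 1 := fun x => by simp
  have hEμ : energy (fun s => p.eval s) μ ≤ 0 := by
    refine integral_nonpos fun x => integral_nonpos fun y => hpneg _ ?_
    have := abs_real_inner_le_norm (x : EuclideanSpace ℝ (Fin d)) (y : EuclideanSpace ℝ (Fin d))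
    rw [hnorm, hnorm, mul_one] at this
    exact abs_le.1 this
  have hEC : energy (fun s => p.eval s) (unifOn C) = 0 := by
    unfold energy
    simp_rw [integral_unifOn]
    rw [Finset.sum_eq_zero, zero_div]
    intro x hx
    rw [Finset.sum_eq_zero, zero_div]
    intro y hy
    by_cases hxy : x = y
    · subst hxy
      rw [real_inner_self_eq_norm_sq, hnorm, one_pow, hp1]
    · exact hpA _ ⟨x, hx, y, hy, hxy, rfl⟩
  -- The two energy functionals agree on `Q_0, …, Q_k`, hence on all degrees at most `k`.
  have hD := linearMap_eq_zero_of_degree_lt Q hQmonic hQdeg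
    (energyLinear μ - energyLinear (unifOn C)) (k + 1) (fun j hj => by
      rw [LinearMap.sub_apply]
      rcases Nat.eq_zero_or_pos j with rfl | hj0
      · rw [(hQmonic 0).natDegree_eq_zero.1 (hQdeg 0), energyLinear_one, energyLinear_one,
          sub_self]
      · exact sub_eq_zero.2 ((hμ0 j hj0 (by omega)).trans (hfeas j hj0 (by omega)).symm))
    (p - Q (k + 1)) (by
      have hdp : p.degree = ((k + 1 : ℕ) : WithBot ℕ) := by
        rw [Polynomial.degree_eq_natDegree hpmon.ne_zero, hpdeg]
      rw [← hdp]
      refine Polynomial.degree_sub_lt_left ?_ hpmon.ne_zero ?_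
      · rw [hdp, Polynomial.degree_eq_natDegree (hQmonic _).ne_zero, hQdeg]
      · rw [hpmon.leadingCoeff, (hQmonic _).leadingCoeff])
  simp only [LinearMap.sub_apply, map_sub] at hD
  change energy (fun s => p.eval s) μ - energy (fun s => p.eval s) (unifOn C)
    - (energy (fun s => (Q (k + 1)).eval s) μ
      - energy (fun s => (Q (k + 1)).eval s) (unifOn C)) = 0 at hD
  linarith
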